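/- arXiv:2009.05729 — 2 statements merged into one kernel-verified Lean document; each statement's English description precedes it below -/
import Mathlib

section
/- Let f : ℝ → ℝ be of bounded variation and let −∞ ≤ a < b ≤ ∞. Then Var_{(a,b)}(f) − Var_{(a,b)}(|f|) = Σ_{x ∈ D_l(f) ∩ (a,b)} [ |f(x) − f(x⁻)| − ||f|(x) − |f|(x⁻)| ] + Σ_{x ∈ D_r(f) ∩ (a,b)} [ |f(x) − f(x⁺)| − ||f|(x) − |f|(x⁺)| ], where the sums are over the (at most countably many) one-sided discontinuity points of f in (a,b). -/
open MeasureTheory Filter Set Topology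

/-- Average of |f| over the interval (a,b). -/
noncomputable def mAvg (f : ℝ → ℝ) (a b : ℝ) : ℝ := (∫ t in a..b, |f t|) / (b - a)

/-- Uncentered Hardy–Littlewood maximal function. -/
noncomputable def uMax (f : ℝ → ℝ) (x : ℝ) : ℝ :=
  sSup {y | ∃ a b : ℝ, a < b ∧ a ≤ x ∧ x ≤ b ∧ y = mAvg f a b}

/-- f has bounded variation on ℝ. -/
def BVfun (f : ℝ → ℝ) : Prop := BoundedVariationOn f Set.univ

/-- Total variation of f over a set, as a real number. -/
noncomputable def varOn (f : ℝ → ℝ) (s : Set ℝ) : ℝ := (eVariationOn f s).toReal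

/-- BV norm: |f(-∞)| + Var(f). -/
noncomputable def bvNorm (f : ℝ → ℝ) : ℝ :=
  |limUnder Filter.atBot f| + varOn f Set.univ

/-- Upper precise representative: limsup over intervals I ∋ x with |I| → 0 of averages of |f|. -/
noncomputable def ubar (f : ℝ → ℝ) (x : ℝ) : ℝ :=
  ⨅ h : {h : ℝ // 0 < h},
    sSup {y | ∃ a b : ℝ, a < b ∧ a ≤ x ∧ x ≤ b ∧ b - a ≤ h.1 ∧ y = mAvg f a b}

/-- The open "interval" (a,b) in ℝ with extended-real endpoints. -/
noncomputable def erealIoo (a b : EReal) : Set ℝ := {x : ℝ | a < (x : EReal) ∧ (x : EReal) < b}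

/-- Value of g at an extended-real point, understood as a limit at ±∞. -/
noncomputable def valAt (g : ℝ → ℝ) (a : EReal) : ℝ :=
  if a = ⊥ then limUnder Filter.atBot g
  else if a = ⊤ then limUnder Filter.atTop g
  else g a.toReal

/-!
The map `t ↦ |t|` shortens the distance between two reals by a defect that is nonzero only when
their signs differ. An oscillation of `f` across `0` which `|f|` does not see must therefore happen
at a jump: if `f u` and `f v` have opposite signs, then at the supremum of the points of `[u, v]`
where `f` has the sign of `f u`, the value of `f` and one of its one-sided limits lie on different
sides of `0`. Hence `Var |f|` plus the defects of all jumps bounds `Var f` from above.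
Conversely, the variation over an open set splits at each of its points `x` into the variations on
either side plus the two jumps at `x`, so any finitely many jumps contribute their defects to
`Var f - Var |f|`.
-/

open Function
open scoped ENNReal

/-- The amount by which the distance of two reals exceeds the distance of their absolute values,
which is nonnegative. It takes values in `ℝ≥0∞`, so that defects can be summed over arbitrary sets
and added to `eVariationOn`. -/
noncomputable def absDefect (u v : ℝ) : ℝ≥0∞ := ENNReal.ofReal (|u - v| - abs (|u| - |v|))

lemma absDefect_comm (u v : ℝ) : absDefect u v = absDefect v u := by
  simp only [absDefect, abs_sub_comm]

lemma absDefect_ne_top (u v : ℝ) : absDefect u v ≠ ∞ := ENNReal.ofReal_ne_top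

lemma toReal_absDefect (u v : ℝ) : (absDefect u v).toReal = |u - v| - abs (|u| - |v|) :=
  ENNReal.toReal_ofReal (sub_nonneg.2 (abs_abs_sub_abs_le u v))

lemma edist_eq_edist_abs_add_absDefect (u v : ℝ) :
    edist u v = edist |u| |v| + absDefect u v := by
  rw [edist_dist, edist_dist, Real.dist_eq, Real.dist_eq, absDefect,
    ← ENNReal.ofReal_add (abs_nonneg _) (sub_nonneg.2 (abs_abs_sub_abs_le _ _)), add_sub_cancel]

lemma edist_eq_edist_abs_of_mul_nonneg {u v : ℝ} (h : 0 ≤ u * v) : edist u v = edist |u| |v| := by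
  rcases mul_nonneg_iff.1 h with ⟨hu, hv⟩ | ⟨hu, hv⟩
  · rw [abs_of_nonneg hu, abs_of_nonneg hv]
  · rw [abs_of_nonpos hu, abs_of_nonpos hv, edist_neg_neg]

lemma edist_le_edist_abs_add_absDefect {u p q v : ℝ} (hup : 0 ≤ u * p) (hqv : 0 ≤ q * v) :
    edist u v ≤ edist |u| |p| + edist |p| |q| + edist |q| |v| + absDefect p q :=
  calc edist u v
    _ ≤ edist u p + edist p q + edist q v := edist_triangle4 _ _ _ _
    _ = edist |u| |p| + edist |p| |q| + edist |q| |v| + absDefect p q := by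
      rw [edist_eq_edist_abs_of_mul_nonneg hup, edist_eq_edist_abs_of_mul_nonneg hqv,
        edist_eq_edist_abs_add_absDefect p q]
      ring

lemma toReal_tsum_absDefect {α : Type*} (f M : α → ℝ) (s : Set α) :
    (∑' x : s, absDefect (f x) (M x)).toReal =
      ∑' x : ↥(s ∩ {y | f y ≠ M y}), (|f x - M x| - abs (|f x| - |M x|)) := by
  simp_rw [ENNReal.tsum_toReal_eq (f := fun x : s => absDefect (f x) (M x))
    fun _ => absDefect_ne_top _ _, toReal_absDefect]
  rw [tsum_subtype s fun x => |f x - M x| - abs (|f x| - |M x|),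
    tsum_subtype (s ∩ {y | f y ≠ M y}) fun x => |f x - M x| - abs (|f x| - |M x|)]
  refine tsum_congr fun x => ?_
  by_cases hx : x ∈ s <;> by_cases hM : f x = M x <;> simp [hx, hM]

section LinearOrder

variable {α E : Type*} [LinearOrder α] [PseudoEMetricSpace E]

lemma tsum_Ioc_add_tsum_Ioc (φ : α → ℝ≥0∞) {a b c : α} (hab : a ≤ b) (hbc : b ≤ c) :
    (∑' x : Ioc a b, φ x) + ∑' x : Ioc b c, φ x = ∑' x : Ioc a c, φ x := by
  rw [← Ioc_union_Ioc_eq_Ioc hab hbc]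
  exact (ENNReal.summable.tsum_union_disjoint (Ioc_disjoint_Ioc_of_le le_rfl)
    ENNReal.summable).symm

lemma tsum_Ico_add_tsum_Ico (φ : α → ℝ≥0∞) {a b c : α} (hab : a ≤ b) (hbc : b ≤ c) :
    (∑' x : Ico a b, φ x) + ∑' x : Ico b c, φ x = ∑' x : Ico a c, φ x := by
  rw [← Ico_union_Ico_eq_Ico hab hbc]
  exact (ENNReal.summable.tsum_union_disjoint Ico_disjoint_Ico_same ENNReal.summable).symm

lemma eVariationOn_Icc_add_Icc (g : α → E) {u v w : α} (huv : u ≤ v) (hvw : v ≤ w) :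
    eVariationOn g (Icc u v) + eVariationOn g (Icc v w) = eVariationOn g (Icc u w) := by
  simpa only [univ_inter] using eVariationOn.Icc_add_Icc g huv hvw (mem_univ v)

lemma eVariationOn_le_of_edist_le_of_superadditive {f : α → E} {s : Set α} {m : α → α → ℝ≥0∞}
    {C : ℝ≥0∞} (hf : ∀ u ∈ s, ∀ v ∈ s, u ≤ v → edist (f u) (f v) ≤ m u v)
    (hm : ∀ u v w, u ≤ v → v ≤ w → m u v + m v w ≤ m u w)
    (hC : ∀ u ∈ s, ∀ v ∈ s, u ≤ v → m u v ≤ C) :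
    eVariationOn f s ≤ C := by
  refine iSup_le fun ⟨n, w, hw, hws⟩ => ?_
  suffices key : ∑ i ∈ Finset.range n, edist (f (w (i + 1))) (f (w i)) ≤ m (w 0) (w n) from
    key.trans (hC _ (hws 0) _ (hws n) (hw n.zero_le))
  induction n with
  | zero => simp
  | succ n ih =>
    rw [Finset.sum_range_succ, edist_comm (f (w (n + 1)))]
    exact (add_le_add ih (hf _ (hws n) _ (hws (n + 1)) (hw n.le_succ))).trans
      (hm _ _ _ (hw n.zero_le) (hw n.le_succ))

lemma edist_add_edist_add_edist_le_eVariationOn (g : α → E) {u s t v : α}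
    (hus : u ≤ s) (hst : s ≤ t) (htv : t ≤ v) :
    edist (g u) (g s) + edist (g s) (g t) + edist (g t) (g v) ≤ eVariationOn g (Icc u v) := by
  have edist_le {x y : α} (hxy : x ≤ y) : edist (g x) (g y) ≤ eVariationOn g (Icc x y) :=
    eVariationOn.edist_le g (left_mem_Icc.2 hxy) (right_mem_Icc.2 hxy)
  rw [← eVariationOn_Icc_add_Icc g (hus.trans hst) htv, ← eVariationOn_Icc_add_Icc g hus hst]
  exact add_le_add (add_le_add (edist_le hus) (edist_le hst)) (edist_le htv)

lemma eVariationOn_abs_le (f : α → ℝ) (s : Set α) :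
    eVariationOn (fun x => |f x|) s ≤ eVariationOn f s := by
  simpa [comp_def] using
    lipschitzWith_one_norm.lipschitzOnWith.comp_eVariationOn_le (mapsTo_univ f s)

variable [TopologicalSpace α] [OrderTopology α] [DenselyOrdered α]

lemma edist_add_edist_add_edist_le_eVariationOn_of_tendsto_right {g : α → E} {u s v : α} {r : E}
    (hus : u ≤ s) (hsv : s < v) (hr : Tendsto g (𝓝[>] s) (𝓝 r)) :
    edist (g u) (g s) + edist (g s) r + edist r (g v) ≤ eVariationOn g (Icc u v) := by
  have := nhdsGT_neBot_of_exists_gt ⟨v, hsv⟩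
  refine le_of_tendsto ((tendsto_const_nhds.add (tendsto_const_nhds.edist hr)).add
    (hr.edist tendsto_const_nhds)) ?_
  filter_upwards [Ioo_mem_nhdsGT hsv] with t ht
  exact edist_add_edist_add_edist_le_eVariationOn g hus ht.1.le ht.2.le

lemma edist_add_edist_add_edist_le_eVariationOn_of_tendsto_left {g : α → E} {u s v : α} {l : E}
    (hus : u < s) (hsv : s ≤ v) (hl : Tendsto g (𝓝[<] s) (𝓝 l)) :
    edist (g u) l + edist l (g s) + edist (g s) (g v) ≤ eVariationOn g (Icc u v) := by
  have := nhdsLT_neBot_of_exists_lt ⟨u, hus⟩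
  refine le_of_tendsto (((tendsto_const_nhds.edist hl).add
    (hl.edist tendsto_const_nhds)).add tendsto_const_nhds) ?_
  filter_upwards [Ioo_mem_nhdsLT hus] with t ht
  exact edist_add_edist_add_edist_le_eVariationOn g ht.1.le ht.2.le hsv

end LinearOrder

section Crossing

variable {α : Type*} [ConditionallyCompleteLinearOrder α] [TopologicalSpace α] [OrderTopology α]
  [DenselyOrdered α]

lemma exists_crossing_of_le_of_lt {β : Type*} [LinearOrder β] [TopologicalSpace β]
    [OrderClosedTopology β] {f L R : α → β} {u v : α} {c : β} (huv : u ≤ v)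
    (hL : ∀ x ∈ Ioc u v, Tendsto f (𝓝[<] x) (𝓝 (L x)))
    (hR : ∀ x ∈ Ico u v, Tendsto f (𝓝[>] x) (𝓝 (R x))) (hu : c ≤ f u) (hv : f v < c) :
    (∃ x ∈ Ico u v, c ≤ f x ∧ R x ≤ c) ∨ ∃ x ∈ Ioc u v, f x ≤ c ∧ c ≤ L x := by
  set A : Set α := {x ∈ Icc u v | c ≤ f x}
  have huA : u ∈ A := ⟨left_mem_Icc.2 huv, hu⟩
  have hA : IsLUB A (sSup A) := isLUB_csSup ⟨u, huA⟩ ⟨v, fun x hx => hx.1.2⟩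
  set s := sSup A
  have hus : u ≤ s := hA.1 huA
  have hsv : s ≤ v := hA.2 fun x hx => hx.1.2
  rcases le_or_gt c (f s) with hs | hs
  · have hsv' : s < v := hsv.lt_of_ne fun h => (h ▸ hs).not_gt hv
    have := nhdsGT_neBot_of_exists_gt ⟨v, hsv'⟩
    refine Or.inl ⟨s, ⟨hus, hsv'⟩, hs, le_of_tendsto (hR s ⟨hus, hsv'⟩) ?_⟩
    filter_upwards [Ioo_mem_nhdsGT hsv'] with t ht
    by_contra! hct
    exact (hA.1 ⟨⟨hus.trans ht.1.le, ht.2.le⟩, hct.le⟩).not_gt ht.1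
  · have hus' : u < s := hus.lt_of_ne fun h => (h ▸ hu).not_gt hs
    have hfreq : ∃ᶠ x in 𝓝[<] s, c ≤ f x :=
      frequently_nhdsWithin_iff.2 <|
        (frequently_nhdsWithin_iff.1 (hA.frequently_mem ⟨u, huA⟩)).mono fun x ⟨hxA, hxs⟩ =>
          ⟨hxA.2, hxs.lt_of_ne fun h => (h ▸ hxA.2).not_gt hs⟩
    exact Or.inr ⟨s, ⟨hus', hsv⟩, hs.le, ge_of_tendsto_of_frequently (hL s ⟨hus', hsv⟩) hfreq⟩

lemma exists_crossing_of_mul_neg {f L R : α → ℝ} {u v : α} (huv : u ≤ v)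
    (hL : ∀ x ∈ Ioc u v, Tendsto f (𝓝[<] x) (𝓝 (L x)))
    (hR : ∀ x ∈ Ico u v, Tendsto f (𝓝[>] x) (𝓝 (R x))) (h : f u * f v < 0) :
    (∃ x ∈ Ico u v, 0 ≤ f u * f x ∧ 0 ≤ R x * f v) ∨
      ∃ x ∈ Ioc u v, 0 ≤ f u * L x ∧ 0 ≤ f x * f v := by
  have mul_nonneg_of_mul_nonpos {y : ℝ} (hy : f u * y ≤ 0) : 0 ≤ y * f v := by
    have hu : 0 < f u ^ 2 := by
      have : f u ≠ 0 := left_ne_zero_of_mul h.ne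
      positivity
    refine nonneg_of_mul_nonneg_right ?_ hu
    calc 0 ≤ f u * y * (f u * f v) := mul_nonneg_of_nonpos_of_nonpos hy h.le
      _ = f u ^ 2 * (y * f v) := by ring
  rcases exists_crossing_of_le_of_lt huv (fun x hx => (hL x hx).const_mul (f u))
      (fun x hx => (hR x hx).const_mul (f u)) (mul_self_nonneg (f u)) h with
    ⟨x, hx, hfx, hRx⟩ | ⟨x, hx, hfx, hLx⟩
  · exact Or.inl ⟨x, hx, hfx, mul_nonneg_of_mul_nonpos hRx⟩
  · exact Or.inr ⟨x, hx, hLx, mul_nonneg_of_mul_nonpos hfx⟩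

lemma edist_le_eVariationOn_abs_add_tsum_absDefect {f L R : α → ℝ} {u v : α} (huv : u ≤ v)
    (hL : ∀ x ∈ Ioc u v, Tendsto f (𝓝[<] x) (𝓝 (L x)))
    (hR : ∀ x ∈ Ico u v, Tendsto f (𝓝[>] x) (𝓝 (R x))) :
    edist (f u) (f v) ≤ eVariationOn (fun x => |f x|) (Icc u v) +
      ((∑' x : Ioc u v, absDefect (f x) (L x)) + ∑' x : Ico u v, absDefect (f x) (R x)) := by
  rcases le_or_gt 0 (f u * f v) with h | h
  · rw [edist_eq_edist_abs_of_mul_nonneg h]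
    exact le_add_right (eVariationOn.edist_le (fun x => |f x|) (left_mem_Icc.2 huv)
      (right_mem_Icc.2 huv))
  · rcases exists_crossing_of_mul_neg huv hL hR h with ⟨s, hs, hus, hsv⟩ | ⟨s, hs, hus, hsv⟩
    · refine (edist_le_edist_abs_add_absDefect hus hsv).trans (add_le_add
        (edist_add_edist_add_edist_le_eVariationOn_of_tendsto_right hs.1 hs.2 (hR s hs).abs)
        (le_add_left ?_))
      exact ENNReal.le_tsum (f := fun x : Ico u v => absDefect (f x) (R x)) ⟨s, hs⟩
    · refine (edist_le_edist_abs_add_absDefect hus hsv).trans (add_le_add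
        (edist_add_edist_add_edist_le_eVariationOn_of_tendsto_left hs.1 hs.2 (hL s hs).abs)
        (le_add_right ?_))
      rw [absDefect_comm]
      exact ENNReal.le_tsum (f := fun x : Ioc u v => absDefect (f x) (L x)) ⟨s, hs⟩

lemma eVariationOn_le_eVariationOn_abs_add_tsum_absDefect {f L R : α → ℝ} {s : Set α}
    (hs : s.OrdConnected) (hL : ∀ x ∈ s, Tendsto f (𝓝[<] x) (𝓝 (L x)))
    (hR : ∀ x ∈ s, Tendsto f (𝓝[>] x) (𝓝 (R x))) :
    eVariationOn f s ≤ eVariationOn (fun x => |f x|) s +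
      ((∑' x : s, absDefect (f x) (L x)) + ∑' x : s, absDefect (f x) (R x)) := by
  refine eVariationOn_le_of_edist_le_of_superadditive
    (m := fun u v => eVariationOn (fun x => |f x|) (Icc u v) +
      ((∑' x : Ioc u v, absDefect (f x) (L x)) + ∑' x : Ico u v, absDefect (f x) (R x)))
    (fun u hu v hv huv => ?_) (fun u v w huv hvw => ?_) (fun u hu v hv _ => ?_)
  · exact edist_le_eVariationOn_abs_add_tsum_absDefect huv
      (fun x hx => hL x (hs.out hu hv (Ioc_subset_Icc_self hx)))
      (fun x hx => hR x (hs.out hu hv (Ico_subset_Icc_self hx)))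
  · rw [← eVariationOn_Icc_add_Icc _ huv hvw,
      ← tsum_Ioc_add_tsum_Ioc (fun x => absDefect (f x) (L x)) huv hvw,
      ← tsum_Ico_add_tsum_Ico (fun x => absDefect (f x) (R x)) huv hvw]
    exact le_of_eq (by ring)
  · have hsub : Icc u v ⊆ s := hs.out hu hv
    exact add_le_add (eVariationOn.mono _ hsub) (add_le_add
      (ENNReal.tsum_mono_subtype (fun x => absDefect (f x) (L x)) (Ioc_subset_Icc_self.trans hsub))
      (ENNReal.tsum_mono_subtype (fun x => absDefect (f x) (R x)) (Ico_subset_Icc_self.trans hsub)))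

end Crossing

section OpenSet

lemma nhdsWithin_inter_of_isOpen {X : Type*} [TopologicalSpace X] {s t : Set X} (hs : IsOpen s)
    {x : X} (hx : x ∈ s) : 𝓝[s ∩ t] x = 𝓝[t] x :=
  nhdsWithin_inter_of_mem (mem_nhdsWithin_of_mem_nhds (hs.mem_nhds hx))

variable {α : Type*} [LinearOrder α] [TopologicalSpace α] [OrderTopology α]

lemma tendsto_leftLim_of_boundedVariationOn {E : Type*} [PseudoEMetricSpace E] [CompleteSpace E]
    {f : α → E} {s : Set α} (hf : BoundedVariationOn f s) (hs : IsOpen s) {x : α} (hx : x ∈ s) :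
    Tendsto f (𝓝[<] x) (𝓝 (leftLim f x)) :=
  tendsto_leftLim_of_tendsto (nhdsWithin_inter_of_isOpen hs hx ▸ hf.exists_tendsto_left x)

lemma tendsto_rightLim_of_boundedVariationOn {E : Type*} [PseudoEMetricSpace E] [CompleteSpace E]
    {f : α → E} {s : Set α} (hf : BoundedVariationOn f s) (hs : IsOpen s) {x : α} (hx : x ∈ s) :
    Tendsto f (𝓝[>] x) (𝓝 (rightLim f x)) :=
  tendsto_rightLim_of_tendsto (nhdsWithin_inter_of_isOpen hs hx ▸ hf.exists_tendsto_right x)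

variable [DenselyOrdered α] [NoMinOrder α] [NoMaxOrder α]

lemma eVariationOn_eq_add_edist_of_isOpen {E : Type*} [PseudoEMetricSpace E] {g : α → E} {l r : E}
    {s : Set α} (hs : IsOpen s) {x : α} (hx : x ∈ s) (hl : Tendsto g (𝓝[<] x) (𝓝 l))
    (hr : Tendsto g (𝓝[>] x) (𝓝 r)) :
    eVariationOn g s = (eVariationOn g (s ∩ Iio x) + edist (g x) l) +
      (eVariationOn g (s ∩ Ioi x) + edist (g x) r) := by
  have hlt : 𝓝[s ∩ Iio x] x = 𝓝[<] x := nhdsWithin_inter_of_isOpen hs hx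
  have hgt : 𝓝[s ∩ Ioi x] x = 𝓝[>] x := nhdsWithin_inter_of_isOpen hs hx
  calc eVariationOn g s
    _ = eVariationOn g (s ∩ Iic x ∪ s ∩ Ici x) := by
      rw [← inter_union_distrib_left, Iic_union_Ici, inter_univ]
    _ = eVariationOn g (s ∩ Iic x) + eVariationOn g (s ∩ Ici x) :=
      eVariationOn.union g ⟨⟨hx, self_mem_Iic⟩, fun _ h => h.2⟩ ⟨⟨hx, self_mem_Ici⟩, fun _ h => h.2⟩
    _ = _ := by
      rw [eVariationOn.eVariationOn_on_inter_Iic_eq_Iio_add_edist (hlt ▸ inferInstance) hx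
          (hlt ▸ hl),
        eVariationOn.eVariationOn_on_inter_Ici_eq_Ioi_add_edist (hgt ▸ inferInstance) hx
          (hgt ▸ hr)]

lemma eVariationOn_abs_add_sum_absDefect_le {f L R : α → ℝ} (T : Finset α) {s : Set α}
    (hs : IsOpen s) (hT : ↑T ⊆ s) (hL : ∀ x ∈ T, Tendsto f (𝓝[<] x) (𝓝 (L x)))
    (hR : ∀ x ∈ T, Tendsto f (𝓝[>] x) (𝓝 (R x))) :
    eVariationOn (fun x => |f x|) s +
      ∑ x ∈ T, (absDefect (f x) (L x) + absDefect (f x) (R x)) ≤ eVariationOn f s := by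
  induction T using Finset.induction_on_max generalizing s with
  | empty => simpa using eVariationOn_abs_le f s
  | insert x T hlt ih =>
    rw [Finset.coe_insert, insert_subset_iff] at hT
    simp only [Finset.forall_mem_insert] at hL hR
    have ih' := ih (hs.inter isOpen_Iio) (fun y hy => ⟨hT.2 hy, hlt y hy⟩) hL.2 hR.2
    rw [Finset.sum_insert fun h => (hlt x h).false,
      eVariationOn_eq_add_edist_of_isOpen hs hT.1 hL.1 hR.1,
      eVariationOn_eq_add_edist_of_isOpen hs hT.1 hL.1.abs hR.1.abs,
      edist_eq_edist_abs_add_absDefect (f x) (L x), edist_eq_edist_abs_add_absDefect (f x) (R x)]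
    calc _ = ((eVariationOn (fun x => |f x|) (s ∩ Iio x) +
              ∑ x ∈ T, (absDefect (f x) (L x) + absDefect (f x) (R x))) +
            (edist |f x| |L x| + absDefect (f x) (L x))) +
          (eVariationOn (fun x => |f x|) (s ∩ Ioi x) +
            (edist |f x| |R x| + absDefect (f x) (R x))) := by ring
      _ ≤ _ := by gcongr; exact eVariationOn_abs_le f _

end OpenSet

section OpenInterval

variable {α : Type*} [ConditionallyCompleteLinearOrder α] [TopologicalSpace α] [OrderTopology α]
  [DenselyOrdered α] [NoMinOrder α] [NoMaxOrder α] {f : α → ℝ} {s : Set α}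

lemma eVariationOn_eq_eVariationOn_abs_add_tsum_absDefect {L R : α → ℝ} (hs : IsOpen s)
    (hs' : s.OrdConnected) (hL : ∀ x ∈ s, Tendsto f (𝓝[<] x) (𝓝 (L x)))
    (hR : ∀ x ∈ s, Tendsto f (𝓝[>] x) (𝓝 (R x))) :
    eVariationOn f s = eVariationOn (fun x => |f x|) s +
      ((∑' x : s, absDefect (f x) (L x)) + ∑' x : s, absDefect (f x) (R x)) := by
  refine (eVariationOn_le_eVariationOn_abs_add_tsum_absDefect hs' hL hR).antisymm ?_
  rw [← ENNReal.tsum_add, ENNReal.tsum_eq_iSup_sum, ENNReal.add_iSup]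
  refine iSup_le fun T => ?_
  have hT : ↑(T.map (Embedding.subtype (· ∈ s))) ⊆ s := by simp
  simpa using eVariationOn_abs_add_sum_absDefect_le _ hs hT (fun x hx => hL x (hT hx))
    (fun x hx => hR x (hT hx))

theorem stmt3_general (hf : BoundedVariationOn f s) (hs : IsOpen s) (hs' : s.OrdConnected) :
    (eVariationOn f s).toReal - (eVariationOn (fun x => |f x|) s).toReal =
      (∑' x : ↥(s ∩ {y | f y ≠ leftLim f y}),
        (|f x - leftLim f x| - abs (|f x| - leftLim (fun y => |f y|) x))) +
      ∑' x : ↥(s ∩ {y | f y ≠ rightLim f y}),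
        (|f x - rightLim f x| - abs (|f x| - rightLim (fun y => |f y|) x)) := by
  have hL x (hx : x ∈ s) : Tendsto f (𝓝[<] x) (𝓝 (leftLim f x)) :=
    tendsto_leftLim_of_boundedVariationOn hf hs hx
  have hR x (hx : x ∈ s) : Tendsto f (𝓝[>] x) (𝓝 (rightLim f x)) :=
    tendsto_rightLim_of_boundedVariationOn hf hs hx
  have hvar := eVariationOn_eq_eVariationOn_abs_add_tsum_absDefect hs hs' hL hR
  have hfin : eVariationOn f s ≠ ∞ := hf
  rw [hvar, ENNReal.add_ne_top, ENNReal.add_ne_top] at hfin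
  obtain ⟨habs, hleft, hright⟩ := hfin
  have hleft_abs (x : ↥(s ∩ {y | f y ≠ leftLim f y})) :
      leftLim (fun y => |f y|) x = |leftLim f x| := leftLim_eq_of_tendsto (hL x x.2.1).abs
  have hright_abs (x : ↥(s ∩ {y | f y ≠ rightLim f y})) :
      rightLim (fun y => |f y|) x = |rightLim f x| := rightLim_eq_of_tendsto (hR x x.2.1).abs
  simp only [hleft_abs, hright_abs]
  rw [← toReal_tsum_absDefect, ← toReal_tsum_absDefect, hvar,
    ENNReal.toReal_add habs (ENNReal.add_ne_top.2 ⟨hleft, hright⟩),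
    ENNReal.toReal_add hleft hright, add_sub_cancel_left]

end OpenInterval

theorem stmt3 (f : ℝ → ℝ) (hf : BVfun f) (a b : EReal) (hab : a < b) :
    varOn f (erealIoo a b) - varOn (fun x => |f x|) (erealIoo a b) =
      (∑' x : ↥(erealIoo a b ∩ {y | f y ≠ Function.leftLim f y}),
        (|f (x : ℝ) - Function.leftLim f (x : ℝ)| -
          abs (|f (x : ℝ)| - Function.leftLim (fun y => |f y|) (x : ℝ)))) +
      (∑' x : ↥(erealIoo a b ∩ {y | f y ≠ Function.rightLim f y}),
        (|f (x : ℝ) - Function.rightLim f (x : ℝ)| -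
          abs (|f (x : ℝ)| - Function.rightLim (fun y => |f y|) (x : ℝ)))) :=
  stmt3_general (hf.mono (subset_univ _)) (isOpen_Ioo.preimage continuous_coe_real_ereal)
    (ordConnected_Ioo.preimage_mono EReal.coe_strictMono.monotone)
end

section
/- Let f ∈ BV(ℝ) and let (f_j) ⊂ BV(ℝ) with ‖f_j − f‖_{BV} → 0. Then for every ε > 0 there exist −∞ < a < b < ∞ such that ∫_{ℝ∖(a,b)} |(M̃f)'| < ε and, for all sufficiently large j, ∫_{ℝ∖(a,b)} |(M̃f_j)'| < ε. -/
open MeasureTheory Filter Set Topology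

/-!
On an interval `D`, a strict interior maximum of `M̃h` can only come from averages over subintervals
of `D`, hence is matched by a large value of `|h|`; and `M̃h ≥ |h|` almost everywhere. So the
variation of `M̃h` over `D` is at most that of `h`, plus twice the oscillation of `M̃h` on `D` for
the two ends of `D`, where this comparison is not available.

At `±∞` the maximal function of `f ∈ BV` converges to `max |f(∞)| |f(-∞)|`, the same limit on both
sides, so it oscillates little on far-away half-lines, where `f` varies little as well. As the `BV`
norm of `h - f` bounds both `|h - f|` and the variation of `h - f`, both facts persist uniformly for
`h` close to `f`. Finally, the integral of `|F'|` is bounded by the variation of `F`.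
-/

section PeaksControlled

variable {α : Type*} [LinearOrder α] {F G p q : α → ℝ} {D : Set α}

/-- `F` has no peaks of its own on `D`: immediately to the right of a point `x`, `G` takes values
below every number larger than `F x`, and whenever `F` rises and then falls, `G` takes values above
every number smaller than the top. A maximal function `F` is controlled in this way by the function
`G` that is averaged. -/
structure PeaksControlledBy (F G : α → ℝ) (D : Set α) : Prop where
  exists_lt : ∀ ⦃x y⦄, x ∈ D → x < y → ∀ ⦃c⦄, F x < c → ∃ z ∈ D ∩ Ioo x y, G z < c
  exists_gt : ∀ ⦃x y w⦄, x ∈ D → y ∈ D → w ∈ D → x < y → y < w → F x < F y → F w < F y →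
    ∀ ⦃c⦄, c < F y → ∃ z ∈ D ∩ Ioo x w, c < G z

namespace PeaksControlledBy

lemma add_two_mul_sub_le (h : PeaksControlledBy F G D) (hp : MonotoneOn p D)
    (hq : MonotoneOn q D) (hG : ∀ z ∈ D, G z = p z - q z) {A : ℝ} {x y w : α} (hx : x ∈ D)
    (hy : y ∈ D) (hw : w ∈ D) (hxy : x < y) (hyw : y < w) (hFxy : F x < F y) (hFwy : F w < F y)
    (hA : ∀ z ∈ D, x < z → A ≤ 2 * p z) : ∀ z ∈ D, w < z → A + 2 * (F y - F x) ≤ 2 * p z := by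
  intro z hz hwz
  refine le_of_forall_pos_le_add fun δ hδ => ?_
  obtain ⟨top, ⟨htop, hxtop, htopw⟩, hGtop⟩ :=
    h.exists_gt hx hy hw hxy hyw hFxy hFwy (show F y - δ / 4 < F y by linarith)
  obtain ⟨low, ⟨hlow, hxlow, hlowtop⟩, hGlow⟩ :=
    h.exists_lt hx hxtop (show F x < F x + δ / 4 by linarith)
  have hAlow := hA low hlow hxlow
  have hqmono := hq hlow htop hlowtop.le
  have hpmono := hp htop hz (htopw.trans hwz).le
  rw [hG _ htop] at hGtop
  rw [hG _ hlow] at hGlow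
  linarith

-- `m` is the valley from which `F ∘ u` is climbing at time `n`, so that `S + 2 * F m - F (u n)`,
-- where `S` is the sum, is `F m` plus the variation spent before `m`. Only this part is bounded so
-- far; the ascent from `m` is accounted for once `F` descends again.
lemma exists_le_forall_sum_abs_sub_le (h : PeaksControlledBy F G D) (hp : MonotoneOn p D)
    (hq : MonotoneOn q D) (hG : ∀ z ∈ D, G z = p z - q z) {K : ℝ}
    (hK : ∀ x ∈ D, ∀ z ∈ D, F x ≤ G z + K) {u : ℕ → α} (hu : Monotone u) (huD : ∀ i, u i ∈ D)
    (n : ℕ) :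
    ∃ m ∈ D, m ≤ u n ∧ F m ≤ F (u n) ∧ ∀ z ∈ D, m < z →
      (∑ i ∈ Finset.range n, |F (u (i + 1)) - F (u i)|) + 2 * F m - F (u n)
        + (p (u 0) + q (u 0)) - K ≤ 2 * p z := by
  induction n with
  | zero =>
    refine ⟨u 0, huD 0, le_rfl, le_rfl, fun z hz hlt => ?_⟩
    have hFG := hK (u 0) (huD 0) z hz
    have hpmono := hp (huD 0) hz hlt.le
    have hqmono := hq (huD 0) hz hlt.le
    rw [hG z hz] at hFG
    rw [Finset.sum_range_zero]
    linarith
  | succ n ih =>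
    obtain ⟨m, hm, hmu, hFm, hbound⟩ := ih
    have hstep : u n ≤ u (n + 1) := hu n.le_succ
    rw [Finset.sum_range_succ]
    rcases le_or_gt (F (u n)) (F (u (n + 1))) with hup | hdown
    · refine ⟨m, hm, hmu.trans hstep, hFm.trans hup, fun z hz hmz => ?_⟩
      rw [abs_of_nonneg (sub_nonneg.2 hup)]
      linarith [hbound z hz hmz]
    · refine ⟨u (n + 1), huD _, le_rfl, le_rfl, fun z hz hlt => ?_⟩
      rw [abs_of_neg (sub_neg.2 hdown)]
      rcases hFm.eq_or_lt with heq | hFlt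
      · linarith [hbound z hz ((hmu.trans hstep).trans_lt hlt)]
      · have hmn : m < u n := hmu.lt_of_ne fun e => hFlt.ne (congrArg F e)
        have hnn : u n < u (n + 1) := hstep.lt_of_ne fun e => hdown.ne' (congrArg F e)
        have := h.add_two_mul_sub_le hp hq hG hm (huD n) (huD _) hmn hnn hFlt hdown hbound z hz hlt
        linarith

lemma sum_abs_sub_le [NoMaxOrder α] (h : PeaksControlledBy F G D) (hp : MonotoneOn p D)
    (hq : MonotoneOn q D) (hG : ∀ z ∈ D, G z = p z - q z) {K V : ℝ}
    (hK : ∀ x ∈ D, ∀ z ∈ D, F x ≤ G z + K)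
    (hV : ∀ x ∈ D, ∀ y ∈ D, p y - p x + (q y - q x) ≤ V) {u : ℕ → α} (hu : Monotone u)
    (huD : ∀ i, u i ∈ D) (n : ℕ) :
    ∑ i ∈ Finset.range n, |F (u (i + 1)) - F (u i)| ≤ V + 2 * K := by
  obtain ⟨m, hm, -, -, hbound⟩ := h.exists_le_forall_sum_abs_sub_le hp hq hG hK hu huD n
  refine le_of_forall_pos_le_add fun δ hδ => ?_
  obtain ⟨y, hmy⟩ := NoMaxOrder.exists_gt m
  obtain ⟨z, ⟨hz, hmz, -⟩, hGz⟩ := h.exists_lt hm hmy (show F m < F m + δ / 2 by linarith)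
  have hFG := hK (u n) (huD n) z hz
  have hpq := hV (u 0) (huD 0) z hz
  have hpay := hbound z hz hmz
  rw [hG z hz] at hGz hFG
  linarith

theorem eVariationOn_le [NoMaxOrder α] (h : PeaksControlledBy F G D) {K : ℝ}
    (hK : ∀ x ∈ D, ∀ z ∈ D, F x ≤ G z + K) :
    eVariationOn F D ≤ eVariationOn G D + ENNReal.ofReal (2 * K) := by
  by_cases hG : eVariationOn G D = ⊤
  · simp [hG]
  have hbv : BoundedVariationOn G D := hG
  obtain ⟨p, q, hp, hq, rfl, hpq⟩ :=
    hbv.locallyBoundedVariationOn.exists_monotoneOn_sub_monotoneOn'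
  have hV : ∀ x ∈ D, ∀ y ∈ D, p y - p x + (q y - q x) ≤ (eVariationOn (p - q) D).toReal :=
    fun x hx y hy => (hpq x hx y hy).trans_le
      ((le_abs_self _).trans (variationOnFromTo.abs_le_eVariationOn hG))
  refine iSup_le fun ⟨n, u, hu, huD⟩ => ?_
  calc ∑ i ∈ Finset.range n, edist (F (u (i + 1))) (F (u i))
      = ENNReal.ofReal (∑ i ∈ Finset.range n, |F (u (i + 1)) - F (u i)|) := by
        simp only [edist_dist, Real.dist_eq, ENNReal.ofReal_sum_of_nonneg fun _ _ => abs_nonneg _]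
    _ ≤ ENNReal.ofReal ((eVariationOn (p - q) D).toReal + 2 * K) :=
        ENNReal.ofReal_le_ofReal (h.sum_abs_sub_le hp hq (fun _ _ => rfl) hK hV hu huD n)
    _ ≤ eVariationOn (p - q) D + ENNReal.ofReal (2 * K) :=
        ENNReal.ofReal_add_le.trans_eq (by rw [ENNReal.ofReal_toReal hG])

end PeaksControlledBy

end PeaksControlled

lemma lintegral_Icc_enorm_deriv_le_of_monotoneOn {f : ℝ → ℝ} {a b : ℝ} (hab : a ≤ b)
    (hf : MonotoneOn f (Icc a b)) :
    ∫⁻ x in Icc a b, ‖deriv f x‖ₑ ≤ ENNReal.ofReal (f b - f a) := by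
  obtain ⟨G, hGf, hG, hle⟩ := hf.exists_tendsto_deriv_liminf_lintegral_enorm_le hab
  exact (lintegral_enorm_le_liminf_of_tendsto hGf fun n => (hG n).aemeasurable.enorm).trans hle

lemma lintegral_Icc_enorm_deriv_le_eVariationOn (F : ℝ → ℝ) {a b : ℝ} (hab : a ≤ b) :
    ∫⁻ x in Icc a b, ‖deriv F x‖ₑ ≤ eVariationOn F (Icc a b) := by
  by_cases hF : eVariationOn F (Icc a b) = ⊤
  · simp [hF]
  have hbv : BoundedVariationOn F (Icc a b) := hF
  obtain ⟨p, q, hp, hq, rfl, hpq⟩ :=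
    hbv.locallyBoundedVariationOn.exists_monotoneOn_sub_monotoneOn'
  have hderiv : ∀ᵐ x ∂volume.restrict (Icc a b),
      ‖deriv (p - q) x‖ₑ ≤ ‖deriv p x‖ₑ + ‖deriv q x‖ₑ := by
    rw [← restrict_Ioo_eq_restrict_Icc, ae_restrict_iff' measurableSet_Ioo]
    filter_upwards [hp.ae_differentiableWithinAt_of_mem, hq.ae_differentiableWithinAt_of_mem]
      with x hpx hqx hx
    have hnhds := Icc_mem_nhds hx.1 hx.2
    have hxI := Ioo_subset_Icc_self hx
    rw [deriv_sub ((hpx hxI).differentiableAt hnhds) ((hqx hxI).differentiableAt hnhds)]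
    exact enorm_sub_le
  have ha := left_mem_Icc.2 hab
  have hb := right_mem_Icc.2 hab
  calc ∫⁻ x in Icc a b, ‖deriv (p - q) x‖ₑ
      ≤ ∫⁻ x in Icc a b, (‖deriv p x‖ₑ + ‖deriv q x‖ₑ) := lintegral_mono_ae hderiv
    _ = (∫⁻ x in Icc a b, ‖deriv p x‖ₑ) + ∫⁻ x in Icc a b, ‖deriv q x‖ₑ :=
        lintegral_add_left (measurable_deriv p).enorm _
    _ ≤ ENNReal.ofReal (p b - p a) + ENNReal.ofReal (q b - q a) :=
        add_le_add (lintegral_Icc_enorm_deriv_le_of_monotoneOn hab hp)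
          (lintegral_Icc_enorm_deriv_le_of_monotoneOn hab hq)
    _ = ENNReal.ofReal (p b - p a + (q b - q a)) :=
        (ENNReal.ofReal_add (sub_nonneg.2 (hp ha hb hab)) (sub_nonneg.2 (hq ha hb hab))).symm
    _ = eVariationOn (p - q) (Icc a b) := by
        rw [hpq a ha b hb, variationOnFromTo.eq_of_le _ _ hab, inter_self, ENNReal.ofReal_toReal hF]

lemma setLIntegral_enorm_deriv_le_eVariationOn (F : ℝ → ℝ) {D : Set ℝ} (hD : IsClosed D)
    [D.OrdConnected] : ∫⁻ x in D, ‖deriv F x‖ₑ ≤ eVariationOn F D := by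
  have hlim := (aecover_Icc (μ := volume.restrict D) tendsto_neg_atTop_atBot
    tendsto_id).lintegral_tendsto_of_countably_generated (measurable_deriv F).enorm.aemeasurable
  refine le_of_tendsto' hlim fun N => ?_
  rw [id, Measure.restrict_restrict measurableSet_Icc]
  rcases (Icc (-N) N ∩ D).eq_empty_or_nonempty with hempty | hne
  · simp [hempty]
  · obtain ⟨c, d, hcd⟩ : ∃ c d, Icc (-N) N ∩ D = Icc c d := ⟨_, _, eq_Icc_of_connected_compact
      ⟨hne, (ordConnected_Icc.inter ‹D.OrdConnected›).isPreconnected⟩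
      (isCompact_Icc.inter_right hD)⟩
    calc ∫⁻ x in Icc (-N) N ∩ D, ‖deriv F x‖ₑ
        ≤ eVariationOn F (Icc (-N) N ∩ D) := by
          rw [hcd] at hne ⊢
          exact lintegral_Icc_enorm_deriv_le_eVariationOn F (nonempty_Icc.1 hne)
      _ ≤ eVariationOn F D := eVariationOn.mono F inter_subset_right

lemma lintegral_compl_Ioo_enorm_deriv_le (F : ℝ → ℝ) (a b : ℝ) :
    ∫⁻ x in (Ioo a b)ᶜ, ‖deriv F x‖ₑ ≤ eVariationOn F (Iic a) + eVariationOn F (Ici b) := by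
  have hcompl : (Ioo a b)ᶜ = Iic a ∪ Ici b := by
    rw [← Ioi_inter_Iio, compl_inter, compl_Ioi, compl_Iio]
  rw [hcompl]
  exact (lintegral_union_le _ _ _).trans (add_le_add
    (setLIntegral_enorm_deriv_le_eVariationOn F isClosed_Iic)
    (setLIntegral_enorm_deriv_le_eVariationOn F isClosed_Ici))

section BV

lemma eVariationOn_add_le {α E : Type*} [LinearOrder α] [SeminormedAddCommGroup E] (f g : α → E)
    (s : Set α) : eVariationOn (f + g) s ≤ eVariationOn f s + eVariationOn g s := by
  refine iSup_le fun ⟨n, u, hu, hus⟩ => ?_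
  calc ∑ i ∈ Finset.range n, edist ((f + g) (u (i + 1))) ((f + g) (u i))
      ≤ ∑ i ∈ Finset.range n, (edist (f (u (i + 1))) (f (u i)) + edist (g (u (i + 1))) (g (u i))) :=
        Finset.sum_le_sum fun i _ => edist_add_add_le _ _ _ _
    _ = _ := Finset.sum_add_distrib
    _ ≤ eVariationOn f s + eVariationOn g s :=
        add_le_add (eVariationOn.sum_le hu hus) (eVariationOn.sum_le hu hus)

variable {f h : ℝ → ℝ}

namespace BVfun

lemma sub (hh : BVfun h) (hf : BVfun f) : BVfun (h - f) := by
  have hneg : BVfun (-f) := LipschitzWith.id.neg.comp_boundedVariationOn hf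
  rw [sub_eq_add_neg]
  exact ne_top_of_le_ne_top (ENNReal.add_ne_top.2 ⟨hh, hneg⟩) (eVariationOn_add_le h (-f) univ)

lemma bddAbove_range_abs (hh : BVfun h) : BddAbove (range fun t => |h t|) := by
  refine ⟨|h 0| + varOn h univ, forall_mem_range.2 fun x => ?_⟩
  have hdist := BoundedVariationOn.dist_le hh (mem_univ x) (mem_univ 0)
  rw [Real.dist_eq] at hdist
  exact sub_le_iff_le_add'.1 ((abs_sub_abs_le_abs_sub (h x) (h 0)).trans hdist)

lemma locallyIntegrable (hh : BVfun h) : LocallyIntegrable h := by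
  obtain ⟨p, q, hp, hq, rfl⟩ :=
    (BoundedVariationOn.locallyBoundedVariationOn hh).exists_monotoneOn_sub_monotoneOn
  exact (monotoneOn_univ.1 hp).locallyIntegrable.sub (monotoneOn_univ.1 hq).locallyIntegrable

lemma eVariationOn_le_bvNorm (hh : BVfun h) (D : Set ℝ) :
    eVariationOn h D ≤ ENNReal.ofReal (bvNorm h) :=
  calc eVariationOn h D ≤ eVariationOn h univ := eVariationOn.mono h (subset_univ D)
    _ = ENNReal.ofReal (varOn h univ) := (ENNReal.ofReal_toReal hh).symm
    _ ≤ ENNReal.ofReal (bvNorm h) :=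
        ENNReal.ofReal_le_ofReal (le_add_of_nonneg_left (abs_nonneg _))

lemma abs_le_bvNorm (hh : BVfun h) (x : ℝ) : |h x| ≤ bvNorm h := by
  have hlim := BoundedVariationOn.tendsto_atBot_limUnder hh
  have hdist : dist (h x) (limUnder atBot h) ≤ varOn h univ :=
    le_of_tendsto' (tendsto_const_nhds.dist hlim) fun y =>
      BoundedVariationOn.dist_le hh (mem_univ x) (mem_univ y)
  rw [Real.dist_eq] at hdist
  exact sub_le_iff_le_add'.1 ((abs_sub_abs_le_abs_sub _ _).trans hdist)

end BVfun

lemma bvNorm_zero : bvNorm 0 = 0 := by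
  have hlim : limUnder atBot (0 : ℝ → ℝ) = 0 := tendsto_const_nhds.limUnder_eq
  have hvar : eVariationOn (0 : ℝ → ℝ) univ = 0 :=
    eVariationOn.constant_on (subsingleton_singleton.anti (image_subset_iff.2 fun _ _ => rfl))
  simp [bvNorm, varOn, hlim, hvar]

end BV

section MaximalFunction

variable {f h : ℝ → ℝ} {a b c x : ℝ}

lemma intervalIntegrable_abs_of_locallyIntegrable (hh : LocallyIntegrable h) (a b : ℝ) :
    IntervalIntegrable (fun t => |h t|) volume a b :=
  ((intervalIntegrable_iff' (f := h)).2 (hh.integrableOn_isCompact isCompact_uIcc)).abs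

lemma mAvg_le (hab : a < b) (hc : ∀ t ∈ Icc a b, |h t| ≤ c) : mAvg h a b ≤ c := by
  have hnorm := intervalIntegral.norm_integral_le_of_norm_le_const (f := fun t => |h t|) fun t ht =>
    (abs_abs (h t)).trans_le (hc t (uIcc_of_le hab.le ▸ uIoc_subset_uIcc ht))
  rw [abs_of_pos (sub_pos.2 hab)] at hnorm
  exact (div_le_iff₀ (sub_pos.2 hab)).2 ((le_abs_self _).trans hnorm)

lemma le_mAvg (hh : LocallyIntegrable h) (hab : a < b) (hc : ∀ t ∈ Ioo a b, c ≤ |h t|) :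
    c ≤ mAvg h a b := by
  have hmono := intervalIntegral.integral_mono_on_of_le_Ioo hab.le intervalIntegrable_const
    (intervalIntegrable_abs_of_locallyIntegrable hh a b) hc
  rw [intervalIntegral.integral_const, smul_eq_mul, mul_comm] at hmono
  exact (le_div_iff₀ (sub_pos.2 hab)).2 hmono

lemma mAvg_le_add_integral_div (hh : LocallyIntegrable h) {g : ℝ → ℝ} (hg : Integrable g)
    (hg0 : 0 ≤ g) (hab : a < b) (hle : ∀ t, |h t| ≤ c + g t) :
    mAvg h a b ≤ c + (∫ t, g t) / (b - a) := by
  have hba : 0 < b - a := sub_pos.2 hab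
  have hmono : ∫ t in a..b, |h t| ≤ c * (b - a) + ∫ t, g t :=
    calc ∫ t in a..b, |h t| ≤ ∫ t in a..b, (c + g t) :=
          intervalIntegral.integral_mono_on hab.le
            (intervalIntegrable_abs_of_locallyIntegrable hh a b)
            (intervalIntegrable_const.add hg.intervalIntegrable) fun t _ => hle t
      _ = c * (b - a) + ∫ t in a..b, g t := by
          rw [intervalIntegral.integral_add intervalIntegrable_const hg.intervalIntegrable,
            intervalIntegral.integral_const, smul_eq_mul, mul_comm]
      _ ≤ c * (b - a) + ∫ t, g t := by
          rw [intervalIntegral.integral_of_le hab.le]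
          exact add_le_add_right (setIntegral_le_integral hg (Eventually.of_forall hg0)) _
  rw [mAvg, div_le_iff₀ hba, add_mul, div_mul_cancel₀ _ hba.ne']
  exact hmono

lemma mAvg_le_mAvg_add (hh : LocallyIntegrable h) (hf : LocallyIntegrable f) {η : ℝ}
    (hhf : ∀ t, |h t - f t| ≤ η) (hab : a < b) : mAvg h a b ≤ mAvg f a b + η := by
  have hba : 0 < b - a := sub_pos.2 hab
  have hfi := intervalIntegrable_abs_of_locallyIntegrable hf a b
  have hmono := intervalIntegral.integral_mono_on hab.le
    (intervalIntegrable_abs_of_locallyIntegrable hh a b)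
    (hfi.add (intervalIntegrable_const (c := η))) fun t _ =>
      sub_le_iff_le_add'.1 ((abs_sub_abs_le_abs_sub (h t) (f t)).trans (hhf t))
  rw [intervalIntegral.integral_add hfi intervalIntegrable_const,
    intervalIntegral.integral_const, smul_eq_mul, mul_comm] at hmono
  rw [mAvg, mAvg, div_add' _ _ _ hba.ne']
  gcongr

lemma mAvg_le_uMax (hb : BddAbove (range fun t => |h t|)) (hab : a < b) (hax : a ≤ x)
    (hxb : x ≤ b) : mAvg h a b ≤ uMax h x := by
  obtain ⟨C, hC⟩ := hb
  refine le_csSup ⟨C, ?_⟩ ⟨a, b, hab, hax, hxb, rfl⟩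
  rintro _ ⟨a, b, hab, -, -, rfl⟩
  exact mAvg_le hab fun t _ => hC (mem_range_self t)

lemma uMax_le (hc : ∀ a b, a < b → a ≤ x → x ≤ b → mAvg h a b ≤ c) : uMax h x ≤ c := by
  refine csSup_le ⟨_, x, x + 1, lt_add_one x, le_rfl, (lt_add_one x).le, rfl⟩ ?_
  rintro _ ⟨a, b, hab, hax, hxb, rfl⟩
  exact hc a b hab hax hxb

lemma exists_lt_mAvg (hc : c < uMax h x) :
    ∃ a b, a < b ∧ a ≤ x ∧ x ≤ b ∧ c < mAvg h a b := by
  contrapose! hc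
  exact uMax_le hc

lemma uMax_le_uMax_add (hh : LocallyIntegrable h) (hf : LocallyIntegrable f)
    (hfb : BddAbove (range fun t => |f t|)) {η : ℝ} (hhf : ∀ t, |h t - f t| ≤ η) (x : ℝ) :
    uMax h x ≤ uMax f x + η :=
  uMax_le fun _ _ hab hax hxb => (mAvg_le_mAvg_add hh hf hhf hab).trans
    (by gcongr; exact mAvg_le_uMax hfb hab hax hxb)

-- Comparing with `max |h| c` instead of `|h|` costs no variation, and makes the oscillation
-- hypothesis of `PeaksControlledBy.eVariationOn_le` a bound on `uMax h` alone.
theorem peaksControlledBy_uMax (hh : LocallyIntegrable h) (hb : BddAbove (range fun t => |h t|))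
    {D : Set ℝ} (hD : IsOpen D) [D.OrdConnected] (hc : ∀ x ∈ D, c ≤ uMax h x) :
    PeaksControlledBy (uMax h) (fun t => max |h t| c) D where
  exists_lt := by
    intro x y hx hxy d hd
    obtain ⟨r, hr, hrD⟩ := (mem_nhdsGE_iff_exists_Ico_subset' hxy).1
      (mem_nhdsWithin_of_mem_nhds (hD.mem_nhds hx))
    obtain ⟨z, hz, hzd⟩ : ∃ z ∈ Ioo x (min r y), |h z| < d := by
      by_contra! hcon
      have hxr : x < min r y := lt_min hr hxy
      exact hd.not_ge ((le_mAvg hh hxr hcon).trans (mAvg_le_uMax hb hxr le_rfl hxr.le))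
    exact ⟨z, ⟨hrD ⟨hz.1.le, hz.2.trans_le (min_le_left _ _)⟩, hz.1,
      hz.2.trans_le (min_le_right _ _)⟩, max_lt hzd ((hc x hx).trans_lt hd)⟩
  exists_gt := by
    intro x y w hx _ hw hxy hyw hFx hFw d hd
    obtain ⟨a, b, hab, hay, hyb, havg⟩ := exists_lt_mAvg (max_lt hd (max_lt hFx hFw))
    obtain ⟨havgd, havg⟩ := max_lt_iff.1 havg
    obtain ⟨havgx, havgw⟩ := max_lt_iff.1 havg
    have hxa : x < a := lt_of_not_ge fun hax =>
      havgx.not_ge (mAvg_le_uMax hb hab hax (hxy.le.trans hyb))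
    have hbw : b < w := lt_of_not_ge fun hwb =>
      havgw.not_ge (mAvg_le_uMax hb hab (hay.trans hyw.le) hwb)
    obtain ⟨z, hz, hdz⟩ : ∃ z ∈ Icc a b, d < |h z| := by
      by_contra! hcon
      exact havgd.not_ge (mAvg_le hab hcon)
    have hxz : x < z := hxa.trans_le hz.1
    have hzw : z < w := hz.2.trans_lt hbw
    exact ⟨z, ⟨OrdConnected.out ‹_› hx hw ⟨hxz.le, hzw.le⟩, hxz, hzw⟩, lt_max_of_lt_left hdz⟩

theorem eVariationOn_uMax_le (hh : LocallyIntegrable h) (hb : BddAbove (range fun t => |h t|))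
    {D : Set ℝ} (hD : IsOpen D) [D.OrdConnected] {K : ℝ}
    (hc : ∀ x ∈ D, uMax h x ∈ Icc c (c + K)) :
    eVariationOn (uMax h) D ≤ eVariationOn h D + ENNReal.ofReal (2 * K) := by
  have hlip : LipschitzWith 1 fun y : ℝ => max |y| c := lipschitzWith_one_norm.max_const c
  have htrunc : eVariationOn ((fun y => max |y| c) ∘ h) D ≤ eVariationOn h D := by
    simpa only [ENNReal.coe_one, one_mul] using
      hlip.lipschitzOnWith.comp_eVariationOn_le (mapsTo_univ h D)
  have hpeaks := peaksControlledBy_uMax hh hb hD fun x hx => (hc x hx).1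
  exact (hpeaks.eVariationOn_le fun x hx z _ =>
    (hc x hx).2.trans (by gcongr; exact le_max_right _ _)).trans (add_le_add htrunc le_rfl)

end MaximalFunction

section LimitAtInfinity

variable {h : ℝ → ℝ} {s c : ℝ}

lemma uMax_comp_neg (h : ℝ → ℝ) (x : ℝ) : uMax (fun t => h (-t)) x = uMax h (-x) := by
  have havg : ∀ a b, mAvg (fun t => h (-t)) a b = mAvg h (-b) (-a) := fun a b => by
    rw [mAvg, mAvg, intervalIntegral.integral_comp_neg fun t => |h t|, neg_sub_neg]
  refine congrArg sSup (Set.ext fun y => ⟨?_, ?_⟩)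
  · rintro ⟨a, b, hab, hax, hxb, rfl⟩
    exact ⟨-b, -a, neg_lt_neg hab, neg_le_neg hxb, neg_le_neg hax, havg a b⟩
  · rintro ⟨a, b, hab, hax, hxb, rfl⟩
    exact ⟨-b, -a, neg_lt_neg hab, neg_le.1 hxb, le_neg.1 hax, by rw [havg, neg_neg, neg_neg]⟩

lemma locallyIntegrable_comp_neg (hh : LocallyIntegrable h) :
    LocallyIntegrable fun t => h (-t) := by
  rw [← Measure.map_neg_eq_self (volume : Measure ℝ)] at hh
  exact (locallyIntegrable_map_homeomorph (Homeomorph.neg ℝ)).1 hh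

lemma le_uMax_of_eventually_atTop (hh : LocallyIntegrable h)
    (hb : BddAbove (range fun t => |h t|)) (hs : ∀ᶠ t in atTop, s ≤ |h t|) (y : ℝ) :
    s ≤ uMax h y := by
  obtain ⟨N, hN⟩ := eventually_atTop.1 hs
  have habs := intervalIntegrable_abs_of_locallyIntegrable hh
  have hint := fun a b => (habs a b).sub (intervalIntegrable_const (c := s))
  set M := ∫ t in y..N, (|h t| - s)
  have hM : ∀ r ≥ N, M ≤ ∫ t in y..r, (|h t| - s) := fun r hr => by
    rw [← intervalIntegral.integral_add_adjacent_intervals (hint y N) (hint N r)]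
    exact le_add_of_nonneg_right
      (intervalIntegral.integral_nonneg hr fun t ht => sub_nonneg.2 (hN t ht.1))
  have hlim : Tendsto (fun r => s + M / (r - y)) atTop (𝓝 s) := by
    simpa only [add_zero, sub_eq_add_neg, id] using tendsto_const_nhds.add
      ((tendsto_atTop_add_const_right atTop (-y) tendsto_id).const_div_atTop M)
  refine le_of_tendsto hlim ?_
  filter_upwards [eventually_gt_atTop y, eventually_ge_atTop N] with r hyr hNr
  have hry : 0 < r - y := sub_pos.2 hyr
  have hr := hM r hNr
  rw [intervalIntegral.integral_sub (habs y r) intervalIntegrable_const,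
    intervalIntegral.integral_const, smul_eq_mul, mul_comm, le_sub_iff_add_le'] at hr
  have havg : s + M / (r - y) ≤ mAvg h y r := by
    rw [mAvg, add_div' _ _ _ hry.ne']
    gcongr
  exact havg.trans (mAvg_le_uMax hb hyr le_rfl hyr.le)

lemma le_uMax_of_eventually_atBot (hh : LocallyIntegrable h)
    (hb : BddAbove (range fun t => |h t|)) (hs : ∀ᶠ t in atBot, s ≤ |h t|) (y : ℝ) :
    s ≤ uMax h y := by
  have hb' : BddAbove (range fun t => |h (-t)|) :=
    hb.mono (range_comp_subset_range Neg.neg fun t => |h t|)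
  have hle := le_uMax_of_eventually_atTop (locallyIntegrable_comp_neg hh) hb'
    (tendsto_neg_atTop_atBot.eventually hs) (-y)
  rwa [uMax_comp_neg, neg_neg] at hle

-- An interval through a far-away `x` either misses the region where `|h|` exceeds `s`, or it is so
-- long that the integral over that region hardly contributes to the average.
lemma eventually_uMax_le (hh : LocallyIntegrable h) (hs : ∀ᶠ t in cocompact ℝ, |h t| ≤ s)
    (hsc : s < c) : ∀ᶠ x in cocompact ℝ, uMax h x ≤ c := by
  have hs0 : 0 ≤ s := hs.exists.elim fun t ht => (abs_nonneg _).trans ht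
  rw [← Metric.cobounded_eq_cocompact, hasBasis_cobounded_norm.eventually_iff] at hs ⊢
  obtain ⟨N, -, hN⟩ := hs
  set g := (Metric.closedBall 0 N).indicator fun t => |h t|
  have hg : Integrable g := (integrable_indicator_iff measurableSet_closedBall).2
    (hh.integrableOn_isCompact (isCompact_closedBall 0 N)).abs
  have hg0 : 0 ≤ g := indicator_nonneg fun t _ => abs_nonneg _
  have hle : ∀ t, |h t| ≤ s + g t := fun t => by
    by_cases ht : t ∈ Metric.closedBall 0 N
    · exact (indicator_of_mem ht fun t => |h t|).symm ▸ le_add_of_nonneg_left hs0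
    · refine (hN (le_of_not_ge fun hle => ht (mem_closedBall_zero_iff.2 hle))).trans ?_
      exact le_add_of_nonneg_right (hg0 t)
  refine ⟨N + (∫ t, g t) / (c - s), trivial, fun x hx => uMax_le fun a b hab hax hxb => ?_⟩
  by_cases hfar : ∀ t ∈ Icc a b, N ≤ |t|
  · exact mAvg_le hab fun t ht => (hN (hfar t ht)).trans hsc.le
  · push Not at hfar
    obtain ⟨t, ht, htN⟩ := hfar
    have hlen : (∫ t, g t) / (c - s) ≤ b - a := by
      have hxt : |x - t| ≤ b - a := abs_sub_le_of_le_of_le hax hxb ht.1 ht.2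
      have hx' : N + (∫ t, g t) / (c - s) ≤ |x| := hx
      linarith [abs_sub_abs_le_abs_sub x t]
    have hsmall : (∫ t, g t) / (b - a) ≤ c - s :=
      (div_le_comm₀ (sub_pos.2 hab) (sub_pos.2 hsc)).2 hlen
    linarith [mAvg_le_add_integral_div hh hg hg0 hab hle]

theorem tendsto_uMax_cocompact (hh : LocallyIntegrable h) (hb : BddAbove (range fun t => |h t|))
    {p q : ℝ} (hp : Tendsto (fun t => |h t|) atTop (𝓝 p))
    (hq : Tendsto (fun t => |h t|) atBot (𝓝 q)) :
    Tendsto (uMax h) (cocompact ℝ) (𝓝 (max p q)) := by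
  refine tendsto_order.2 ⟨fun s hs => Eventually.of_forall fun y => ?_, fun c hc => ?_⟩
  · obtain ⟨r, hsr, hr⟩ := exists_between hs
    refine hsr.trans_le ((lt_max_iff.1 hr).elim (fun hrp => ?_) fun hrq => ?_)
    · exact le_uMax_of_eventually_atTop hh hb (hp.eventually_const_le hrp) y
    · exact le_uMax_of_eventually_atBot hh hb (hq.eventually_const_le hrq) y
  · obtain ⟨r, hr, hrc⟩ := exists_between hc
    obtain ⟨s, hs, hsr⟩ := exists_between hr
    have hle : ∀ᶠ t in cocompact ℝ, |h t| ≤ s := by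
      rw [cocompact_eq_atBot_atTop, eventually_sup]
      exact ⟨hq.eventually_le_const ((le_max_right p q).trans_lt hs),
        hp.eventually_le_const ((le_max_left p q).trans_lt hs)⟩
    filter_upwards [eventually_uMax_le hh hle hsr] with x hx using hx.trans_lt hrc

end LimitAtInfinity

section Tails

variable {f h : ℝ → ℝ} {η L : ℝ} {D : Set ℝ}

lemma eVariationOn_uMax_le_of_bvNorm_sub_le (hf : BVfun f) (hh : BVfun h) (hD : IsOpen D)
    [D.OrdConnected] (hη : 0 ≤ η) (hL : ∀ x ∈ D, |uMax f x - L| ≤ η)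
    (hV : eVariationOn f D ≤ ENNReal.ofReal η) (hnorm : bvNorm (h - f) ≤ η) :
    eVariationOn (uMax h) D ≤ ENNReal.ofReal (10 * η) := by
  have hclose : ∀ t, |h t - f t| ≤ η := fun t => ((hh.sub hf).abs_le_bvNorm t).trans hnorm
  have hmax : ∀ x ∈ D, uMax h x ∈ Icc (L - 2 * η) (L - 2 * η + 4 * η) := fun x hx => by
    have hle := uMax_le_uMax_add hh.locallyIntegrable hf.locallyIntegrable hf.bddAbove_range_abs
      hclose x
    have hge := uMax_le_uMax_add hf.locallyIntegrable hh.locallyIntegrable hh.bddAbove_range_abs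
      (fun t => abs_sub_comm (f t) (h t) ▸ hclose t) x
    have hfx := abs_le.1 (hL x hx)
    exact ⟨by linarith, by linarith⟩
  calc eVariationOn (uMax h) D
      ≤ eVariationOn h D + ENNReal.ofReal (2 * (4 * η)) :=
        eVariationOn_uMax_le hh.locallyIntegrable hh.bddAbove_range_abs hD hmax
    _ ≤ eVariationOn (h - f) D + eVariationOn f D + ENNReal.ofReal (2 * (4 * η)) := by
        gcongr
        simpa only [sub_add_cancel] using eVariationOn_add_le (h - f) f D
    _ ≤ ENNReal.ofReal η + ENNReal.ofReal η + ENNReal.ofReal (2 * (4 * η)) := by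
        gcongr
        exact ((hh.sub hf).eVariationOn_le_bvNorm D).trans (ENNReal.ofReal_le_ofReal hnorm)
    _ = ENNReal.ofReal (10 * η) := by
        rw [← ENNReal.ofReal_add hη hη, ← ENNReal.ofReal_add (by positivity) (by positivity)]
        ring_nf

lemma BVfun.exists_eventually_cocompact_abs_uMax_sub_le (hf : BVfun f) (hη : 0 < η) :
    ∃ L, ∀ᶠ x in cocompact ℝ, |uMax f x - L| ≤ η :=
  ⟨_, ((tendsto_uMax_cocompact hf.locallyIntegrable hf.bddAbove_range_abs
    (BoundedVariationOn.tendsto_atTop_limUnder hf).abs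
    (BoundedVariationOn.tendsto_atBot_limUnder hf).abs).eventually
      (Metric.closedBall_mem_nhds _ hη))⟩

lemma BVfun.exists_forall_eVariationOn_uMax_tails_le (hf : BVfun f) (hη : 0 < η) :
    ∃ a b, a < b ∧ ∀ h, BVfun h → bvNorm (h - f) ≤ η →
      eVariationOn (uMax h) (Iic a) ≤ ENNReal.ofReal (10 * η) ∧
      eVariationOn (uMax h) (Ici b) ≤ ENNReal.ofReal (10 * η) := by
  obtain ⟨L, hL⟩ := hf.exists_eventually_cocompact_abs_uMax_sub_le hη
  rw [cocompact_eq_atBot_atTop, eventually_sup] at hL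
  have hbot := BoundedVariationOn.tendsto_eVariationOn_Iic_zero hf
  have htop := BoundedVariationOn.tendsto_eVariationOn_Ici_zero hf
  simp only [univ_inter, principal_univ, top_inf_eq] at hbot htop
  have hη' : 0 < ENNReal.ofReal η := ENNReal.ofReal_pos.2 hη
  obtain ⟨a, hfa, hLa, ha⟩ := (hbot.eventually_le_const hη').and
    ((eventually_forall_le_atBot.2 hL.1).and (eventually_lt_atBot 0)) |>.exists
  obtain ⟨b, hfb, hLb, hb⟩ := (htop.eventually_le_const hη').and
    ((eventually_forall_ge_atTop.2 hL.2).and (eventually_gt_atTop 0)) |>.exists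
  refine ⟨a - 1, b + 1, by linarith, fun h hh hnorm => ⟨?_, ?_⟩⟩
  · have hIio : eVariationOn f (Iio a) ≤ ENNReal.ofReal η :=
      (eVariationOn.mono f Iio_subset_Iic_self).trans hfa
    exact (eVariationOn.mono _ (Iic_subset_Iio.2 (sub_one_lt a))).trans
      (eVariationOn_uMax_le_of_bvNorm_sub_le hf hh isOpen_Iio hη.le
        (fun x hx => hLa x (le_of_lt hx)) hIio hnorm)
  · have hIoi : eVariationOn f (Ioi b) ≤ ENNReal.ofReal η :=
      (eVariationOn.mono f Ioi_subset_Ici_self).trans hfb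
    exact (eVariationOn.mono _ (Ici_subset_Ioi.2 (lt_add_one b))).trans
      (eVariationOn_uMax_le_of_bvNorm_sub_le hf hh isOpen_Ioi hη.le
        (fun x hx => hLb x (le_of_lt hx)) hIoi hnorm)

end Tails

theorem stmt8_general {f : ℝ → ℝ} (hf : BVfun f) {ε : ℝ} (hε : 0 < ε) :
    ∃ a b : ℝ, a < b ∧ ∃ δ > 0, ∀ h, BVfun h → bvNorm (h - f) < δ →
      IntegrableOn (deriv (uMax h)) (Ioo a b)ᶜ ∧ ∫ x in (Ioo a b)ᶜ, |deriv (uMax h) x| < ε := by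
  have hη : 0 < ε / 21 := by positivity
  obtain ⟨a, b, hab, htails⟩ := hf.exists_forall_eVariationOn_uMax_tails_le hη
  refine ⟨a, b, hab, ε / 21, hη, fun h hh hnorm => ?_⟩
  obtain ⟨hIic, hIci⟩ := htails h hh hnorm.le
  have hlint : ∫⁻ x in (Ioo a b)ᶜ, ‖deriv (uMax h) x‖ₑ < ENNReal.ofReal ε :=
    calc ∫⁻ x in (Ioo a b)ᶜ, ‖deriv (uMax h) x‖ₑ
        ≤ ENNReal.ofReal (10 * (ε / 21)) + ENNReal.ofReal (10 * (ε / 21)) :=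
          (lintegral_compl_Ioo_enorm_deriv_le (uMax h) a b).trans (add_le_add hIic hIci)
      _ = ENNReal.ofReal (20 * (ε / 21)) := by
          rw [← ENNReal.ofReal_add (by positivity) (by positivity)]
          ring_nf
      _ < ENNReal.ofReal ε := (ENNReal.ofReal_lt_ofReal_iff hε).2 (by linarith)
  have hint : IntegrableOn (deriv (uMax h)) (Ioo a b)ᶜ :=
    ⟨(measurable_deriv _).aestronglyMeasurable, hlint.trans ENNReal.ofReal_lt_top⟩
  refine ⟨hint, (ENNReal.ofReal_lt_ofReal_iff hε).1 ?_⟩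
  exact (ofReal_integral_norm_eq_lintegral_enorm hint).trans_lt hlint

theorem stmt8 (f : ℝ → ℝ) (hf : BVfun f) (fj : ℕ → ℝ → ℝ) (hfj : ∀ j, BVfun (fj j))
    (hconv : Tendsto (fun j => bvNorm (fj j - f)) atTop (𝓝 0))
    (ε : ℝ) (hε : 0 < ε) :
    ∃ a b : ℝ, a < b ∧
      (∫ x in (Set.Ioo a b)ᶜ, |deriv (uMax f) x|) < ε ∧
      ∀ᶠ j in atTop, (∫ x in (Set.Ioo a b)ᶜ, |deriv (uMax (fj j)) x|) < ε := by
  obtain ⟨a, b, hab, δ, hδ, hball⟩ := stmt8_general hf hε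
  refine ⟨a, b, hab, (hball f hf (by rwa [sub_self, bvNorm_zero])).2, ?_⟩
  filter_upwards [hconv.eventually_lt_const hδ] with j hj using (hball (fj j) (hfj j) hj).2
end
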